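/- Let Q_0 be a finite set and let α ∈ ℕ^{Q_0} be nonzero and indivisible (the greatest common divisor of its coordinates is 1). Then there exists a weight λ ∈ ℤ^{Q_0} that is generic with respect to α, i.e., λ(α) = 0 and λ(β) ≠ 0 for every β ∈ ℕ^{Q_0} with 0 ≤ β ≤ α componentwise and β ∉ {0, α}. -/

import Mathlib

open scoped BigOperators

/-- Finitely many nonzero integer vectors can be avoided simultaneously. -/
theorem exists_avoid (Q : Type) [Fintype Q] {ι : Type} (s : Finset ι) (c : ι → Q → ℤ)
    (hc : ∀ k ∈ s, c k ≠ 0) : ∃ x : Q → ℤ, ∀ k ∈ s, ∑ i, x i * c k i ≠ 0 := by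
  classical
  let P : ι → MvPolynomial Q ℤ := fun k => ∑ i, MvPolynomial.X i * MvPolynomial.C (c k i)
  have hev : ∀ k (x : Q → ℤ), MvPolynomial.eval x (P k) = ∑ i, x i * c k i := by
    intro k x; simp [P]
  have hP : ∀ k ∈ s, P k ≠ 0 := by
    intro k hk h0
    apply hc k hk
    funext j
    have := hev k (Pi.single j 1)
    rw [h0] at this
    simpa [Pi.single_apply] using this.symm
  have hprod : (∏ k ∈ s, P k) ≠ 0 := Finset.prod_ne_zero_iff.mpr hP
  by_contra! hcon
  apply hprod
  apply MvPolynomial.funext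
  intro x
  obtain ⟨k, hk, h⟩ := hcon x
  rw [map_prod, map_zero]
  exact Finset.prod_eq_zero hk ((hev k x).trans h)

/-- For every nonzero indivisible dimension vector `α ∈ ℕ^{Q₀}` there is a weight
`λ ∈ ℤ^{Q₀}` generic with respect to `α`: `λ(α) = 0` and `λ(β) ≠ 0` for every
`β ∈ ℕ^{Q₀}` with `0 ≤ β ≤ α` componentwise and `β ∉ {0, α}`. -/
theorem exists_generic_weight
    (Q₀ : Type) [Fintype Q₀] (α : Q₀ → ℕ) (hα : α ≠ 0)
    (hind : Finset.univ.gcd α = 1) :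
    ∃ lam : Q₀ → ℤ,
      (∑ i, lam i * (α i : ℤ)) = 0 ∧
        ∀ β : Q₀ → ℕ, (∀ i, β i ≤ α i) → β ≠ 0 → β ≠ α →
          (∑ i, lam i * (β i : ℤ)) ≠ 0 := by
  classical
  obtain ⟨j, hj⟩ := Function.ne_iff.mp hα
  have hj : 0 < α j := Nat.pos_of_ne_zero hj
  let c : (Q₀ → ℕ) → Q₀ → ℤ := fun β i => (α j : ℤ) * β i - α i * β j
  obtain ⟨x, hx⟩ := exists_avoid Q₀
    ((Fintype.piFinset fun i => Finset.range (α i + 1)).filter fun β => β ≠ 0 ∧ β ≠ α) c (by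
      intro β hβ h0
      simp only [Finset.mem_filter, Fintype.mem_piFinset, Finset.mem_range] at hβ
      obtain ⟨hle, hb0, hbα⟩ := hβ
      have hcz : ∀ i, α j * β i = β j * α i := by
        intro i
        have : (α j : ℤ) * β i - α i * β j = 0 := congrFun h0 i
        have h2 : (α j : ℤ) * β i = β j * α i := by linarith
        exact_mod_cast h2
      have hdvd : α j ∣ β j := by
        have h1 : α j ∣ Finset.univ.gcd fun i => β j * α i :=
          Finset.dvd_gcd fun i _ => ⟨β i, (hcz i).symm⟩
        rw [Finset.gcd_mul_left, hind] at h1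
        simpa using h1
      rcases Nat.eq_zero_or_pos (β j) with h | h
      · apply hb0
        funext i
        have := hcz i
        rw [h, zero_mul] at this
        exact (Nat.mul_eq_zero.mp this).resolve_left hj.ne'
      · apply hbα
        have he : β j = α j :=
          le_antisymm (Nat.lt_succ_iff.mp (hle j)) (Nat.le_of_dvd h hdvd)
        funext i
        have := hcz i
        rw [he] at this
        exact Nat.eq_of_mul_eq_mul_left hj this)
  have key : ∀ β : Q₀ → ℕ,
      ∑ i, ((α j : ℤ) * x i - (if i = j then ∑ k, x k * α k else 0)) * (β i : ℤ)
        = ∑ i, x i * c β i := by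
    intro β
    simp only [c, sub_mul, mul_sub, Finset.sum_sub_distrib, ite_mul, zero_mul,
      Finset.sum_ite_eq', Finset.mem_univ, if_true, Finset.sum_mul]
    congr 1 <;> exact Finset.sum_congr rfl fun i _ => by ring
  refine ⟨_, (key α).trans ?_, fun β hle h0 h1 => ?_⟩
  · exact Finset.sum_eq_zero fun i _ => by simp only [c]; ring
  · rw [key β]
    apply hx
    simp only [Finset.mem_filter, Fintype.mem_piFinset, Finset.mem_range]
    exact ⟨fun i => Nat.lt_succ_of_le (hle i), h0, h1⟩
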